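/- arXiv:2306.12192 — 2 statements merged into one kernel-verified Lean document; each statement's English description precedes it below -/
import Mathlib

section
/- Let G = GP(Γ, 𝒢) be a graph product of groups, let U, W ⊆ V(Γ), and let g ∈ G. Then there exist a subset P ⊆ U ∩ W and an element h ∈ G_W such that g G_U g⁻¹ ∩ G_W = h G_P h⁻¹. -/
section GraphProduct

variable {V : Type} [Fintype V] (Γ : SimpleGraph V) (Gv : V → Type) [∀ v, Group (Gv v)]

/-- The commutation relators defining a graph product: for each edge `{u, v}` of `Γ`,
the elements of `G_u` commute with the elements of `G_v` inside the free product. -/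
def graphProductRels : Set (Monoid.CoprodI Gv) :=
  {x | ∃ (u v : V), Γ.Adj u v ∧ ∃ (a : Gv u) (b : Gv v),
    x = Monoid.CoprodI.of a * Monoid.CoprodI.of b *
      (Monoid.CoprodI.of a)⁻¹ * (Monoid.CoprodI.of b)⁻¹}

/-- The graph product of the groups `Gv` over the finite simple graph `Γ`: the free
product of the vertex groups modulo commutation of adjacent vertex groups. -/
def GraphProduct : Type :=
  Monoid.CoprodI Gv ⧸ Subgroup.normalClosure (graphProductRels Γ Gv)

instance : Group (GraphProduct Γ Gv) :=
  inferInstanceAs (Group (Monoid.CoprodI Gv ⧸ Subgroup.normalClosure (graphProductRels Γ Gv)))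

/-- The canonical map of a vertex group into the graph product. -/
def GraphProduct.of (v : V) : Gv v →* GraphProduct Γ Gv :=
  (QuotientGroup.mk' _).comp Monoid.CoprodI.of

/-- The full subgroup on a set `S` of vertices: the subgroup generated by the vertex
groups of the vertices in `S`. -/
def GraphProduct.full (S : Set V) : Subgroup (GraphProduct Γ Gv) :=
  ⨆ v ∈ S, (GraphProduct.of Γ Gv v).range

/-- A graph product is non-degenerate if all vertex groups are nontrivial and `Γ` has
more than one vertex. -/
def GraphProduct.NonDegenerate : Prop :=
  (∀ v, Nontrivial (Gv v)) ∧ Nontrivial V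

/-- The conjugate `g H g⁻¹` of a subgroup. -/
def conjSubgroup {G : Type*} [Group G] (g : G) (H : Subgroup G) : Subgroup G :=
  H.map (MulAut.conj g).toMonoidHom

/-- Edge distance at least `n` between two vertices of a graph (with the convention
that vertices in different components are at infinite distance). -/
def SimpleGraph.distAtLeast (n : ℕ) (a b : V) : Prop :=
  a ≠ b ∧ (¬ Γ.Reachable a b ∨ n ≤ Γ.dist a b)

/-- Two vertices are separated (w.r.t. the graph product) if their edge distance is at
least 2 and the full subgroup on the intersection of their links is finite. -/
def GraphProduct.SeparatedPair (a b : V) : Prop :=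
  a ≠ b ∧ ¬ Γ.Adj a b ∧
    Finite (GraphProduct.full Γ Gv (Γ.neighborSet a ∩ Γ.neighborSet b))

/-- The graph-theoretic diameter of `Γ` is at least `n`. -/
def SimpleGraph.diamAtLeast (n : ℕ) : Prop := ∃ a b : V, Γ.distAtLeast n a b

end GraphProduct

section FreePerm

open Monoid

variable {X A : Type} [Group A]

/-- Reindexing endomorphism of a free power of `A`. -/
def reindex (e : X → X) : CoprodI (fun _ : X => A) →* CoprodI (fun _ : X => A) :=
  CoprodI.lift (fun i => CoprodI.of (M := fun _ : X => A) (i := e i))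

theorem reindex_of (e : X → X) (i : X) (a : A) :
    reindex e (CoprodI.of (M := fun _ : X => A) (i := i) a) =
      CoprodI.of (M := fun _ : X => A) (i := e i) a := by
  simp [reindex]

theorem reindex_reindex (e f : X → X) (w : CoprodI (fun _ : X => A)) :
    reindex e (reindex f w) = reindex (e ∘ f) w := by
  have : (reindex e).comp (reindex f) = reindex (A := A) (e ∘ f) := by
    apply CoprodI.ext_hom
    intro i
    ext a
    simp only [MonoidHom.comp_apply, reindex_of, Function.comp]
  exact DFunLike.congr_fun this w

theorem reindex_id (w : CoprodI (fun _ : X => A)) : reindex id w = w := by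
  have : reindex (A := A) (id : X → X) = MonoidHom.id _ := by
    apply CoprodI.ext_hom
    intro i
    ext a
    simp only [MonoidHom.comp_apply, reindex_of, id, MonoidHom.id_apply]
  exact DFunLike.congr_fun this w

/-- Action of a group on a free power through permutations of the index set. -/
def reindexAct (H : Type) [Group H] [MulAction H X] :
    H →* MulAut (CoprodI (fun _ : X => A)) where
  toFun h :=
    { toFun := reindex (fun x => h • x)
      invFun := reindex (fun x => h⁻¹ • x)
      left_inv := fun w => by
        rw [reindex_reindex]
        convert reindex_id w
        ext x; simp
      right_inv := fun w => by
        rw [reindex_reindex]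
        convert reindex_id w
        ext x; simp
      map_mul' := map_mul _ }
  map_one' := by
    ext w
    change reindex _ w = w
    convert reindex_id w
    ext x; simp
  map_mul' a b := by
    ext w
    change reindex _ w = reindex _ (reindex _ w)
    rw [reindex_reindex]
    congr 2
    ext x; simp [mul_smul]

theorem reindexAct_of (H : Type) [Group H] [MulAction H X] (h : H) (i : X) (a : A) :
    reindexAct H h (CoprodI.of (M := fun _ : X => A) (i := i) a) =
      CoprodI.of (M := fun _ : X => A) (i := h • i) a :=
  reindex_of _ i a

theorem reindex_word_prod (e : X → X) (l : List (Σ _ : X, A)) :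
    reindex e (l.map fun p => CoprodI.of (M := fun _ : X => A) (i := p.1) p.2).prod =
      ((l.map fun p => (⟨e p.1, p.2⟩ : Σ _ : X, A)).map
        fun p => CoprodI.of (M := fun _ : X => A) (i := p.1) p.2).prod := by
  induction l with
  | nil => simp
  | cons a l ih => simp [reindex_of, ih]

/-- Every element of a free power has finitely many indices such that a permutation fixes
the element iff it fixes these indices. -/
theorem reindex_fix_iff (w : CoprodI (fun _ : X => A)) :
    ∃ l : List X, ∀ e : Equiv.Perm X, reindex e w = w ↔ ∀ i ∈ l, e i = i := by
  classical
  obtain ⟨w', rfl⟩ := (CoprodI.Word.equiv (M := fun _ : X => A)).symm.surjective w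
  change ∃ l : List X, ∀ e : Equiv.Perm X, reindex e w'.prod = w'.prod ↔ _
  refine ⟨w'.toList.map Sigma.fst, fun e => ?_⟩
  let w'' : CoprodI.Word (fun _ : X => A) :=
    { toList := w'.toList.map fun p => ⟨e p.1, p.2⟩
      ne_one := by
        intro l hl
        rw [List.mem_map] at hl
        obtain ⟨p, hp, rfl⟩ := hl
        exact w'.ne_one p hp
      chain_ne := by
        rw [List.isChain_map]
        exact w'.chain_ne.imp (fun a b h => by simpa using h) }
  have h1 : reindex e w'.prod = w''.prod := reindex_word_prod e w'.toList
  rw [h1]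
  have h2 : w''.prod = w'.prod ↔ w'' = w' :=
    (CoprodI.Word.equiv (M := fun _ : X => A)).symm.injective.eq_iff
  rw [h2, CoprodI.Word.ext_iff]
  change List.map _ _ = _ ↔ _
  have h3 : ∀ (f : (Σ _ : X, A) → Σ _ : X, A) (l : List (Σ _ : X, A)),
      l.map f = l ↔ ∀ p ∈ l, f p = p := by
    intro f l
    conv_lhs => rhs; rw [← List.map_id l]
    rw [List.map_inj_left]; rfl
  rw [h3]
  constructor
  · intro h i hi
    rw [List.mem_map] at hi
    obtain ⟨p, hp, rfl⟩ := hi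
    exact congrArg Sigma.fst (h p hp)
  · rintro h ⟨i, a⟩ hp
    have := h i (List.mem_map.2 ⟨_, hp, rfl⟩)
    simp [this]

end FreePerm

namespace GraphProduct

variable {V : Type} [Fintype V] {Γ : SimpleGraph V} {Gv : V → Type} [∀ v, Group (Gv v)]

theorem of_comm {u v : V} (h : Γ.Adj u v) (a : Gv u) (b : Gv v) :
    of Γ Gv u a * of Γ Gv v b = of Γ Gv v b * of Γ Gv u a := by
  have : (QuotientGroup.mk' (Subgroup.normalClosure (graphProductRels Γ Gv)))
      (Monoid.CoprodI.of a * Monoid.CoprodI.of b *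
      (Monoid.CoprodI.of a)⁻¹ * (Monoid.CoprodI.of b)⁻¹) = 1 := by
    rw [← MonoidHom.mem_ker, QuotientGroup.ker_mk']
    exact Subgroup.subset_normalClosure ⟨u, v, h, a, b, rfl⟩
  simp only [map_mul, map_inv] at this
  rw [mul_inv_eq_one, mul_inv_eq_iff_eq_mul] at this
  exact this

/-- Universal property. -/
def lift {K : Type*} [Group K] (f : ∀ v, Gv v →* K)
    (hf : ∀ u v, Γ.Adj u v → ∀ a b, f u a * f v b = f v b * f u a) : GraphProduct Γ Gv →* K :=
  QuotientGroup.lift _ (Monoid.CoprodI.lift f) (by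
    change _ ≤ (Monoid.CoprodI.lift f).ker
    apply Subgroup.normalClosure_le_normal
    rintro x ⟨u, v, h, a, b, rfl⟩
    change Monoid.CoprodI.lift f _ = 1
    simp [hf u v h a b])

theorem lift_of {K : Type*} [Group K] (f : ∀ v, Gv v →* K)
    (hf : ∀ u v, Γ.Adj u v → ∀ a b, f u a * f v b = f v b * f u a) (v : V) (a : Gv v) :
    lift (Γ := Γ) f hf (of Γ Gv v a) = f v a :=
  Monoid.CoprodI.lift_of f a

theorem hom_ext' {K : Type*} [Group K] {f g : GraphProduct Γ Gv →* K}
    (h : ∀ v a, f (of Γ Gv v a) = g (of Γ Gv v a)) : f = g := by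
  apply QuotientGroup.monoidHom_ext
  apply Monoid.CoprodI.ext_hom
  intro v
  ext a
  exact h v a

theorem of_mem_full {S : Set V} {v : V} (h : v ∈ S) (a : Gv v) : of Γ Gv v a ∈ full Γ Gv S :=
  (le_iSup₂ (f := fun v (_ : v ∈ S) => (of Γ Gv v).range) v h) ⟨a, rfl⟩

theorem full_le {S : Set V} {K : Subgroup (GraphProduct Γ Gv)}
    (h : ∀ v ∈ S, ∀ a, of Γ Gv v a ∈ K) : full Γ Gv S ≤ K := by
  refine iSup₂_le fun v hv => ?_
  rintro _ ⟨a, rfl⟩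
  exact h v hv a

theorem full_mono {S T : Set V} (h : S ⊆ T) : full Γ Gv S ≤ full Γ Gv T :=
  full_le fun _ hv a => of_mem_full (h hv) a

open Classical in
/-- The retraction onto a full subgroup. -/
noncomputable def ret (S : Set V) : GraphProduct Γ Gv →* GraphProduct Γ Gv :=
  lift (fun v => if v ∈ S then of Γ Gv v else 1) (by
    intro u v h a b
    by_cases hu : u ∈ S <;> by_cases hv : v ∈ S <;> simp [hu, hv, of_comm h])

theorem ret_of_mem {S : Set V} {v : V} (h : v ∈ S) (a : Gv v) :
    ret S (of Γ Gv v a) = of Γ Gv v a := by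
  simp [ret, lift_of, h]

theorem ret_of_notMem {S : Set V} {v : V} (h : v ∉ S) (a : Gv v) :
    ret S (of Γ Gv v a) = 1 := by
  simp [ret, lift_of, h]

theorem ret_ret (S T : Set V) (x : GraphProduct Γ Gv) : ret S (ret T x) = ret (S ∩ T) x := by
  have : (ret S).comp (ret T) = ret (Γ := Γ) (Gv := Gv) (S ∩ T) := by
    apply hom_ext'
    intro v a
    rw [MonoidHom.comp_apply]
    by_cases hT : v ∈ T
    · rw [ret_of_mem hT]
      by_cases hS : v ∈ S
      · rw [ret_of_mem hS, ret_of_mem (show v ∈ S ∩ T from ⟨hS, hT⟩)]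
      · rw [ret_of_notMem hS, ret_of_notMem (show v ∉ S ∩ T from fun h => hS h.1)]
    · rw [ret_of_notMem hT, ret_of_notMem (show v ∉ S ∩ T from fun h => hT h.2), map_one]
  exact DFunLike.congr_fun this x

theorem ret_eq {S : Set V} {x : GraphProduct Γ Gv} (h : x ∈ full Γ Gv S) : ret S x = x := by
  have : full Γ Gv S ≤ (ret S).eqLocus (MonoidHom.id _) :=
    full_le fun v hv a => ret_of_mem hv a
  exact this h

theorem full_univ : full Γ Gv Set.univ = ⊤ := by
  have h : (QuotientGroup.mk' (Subgroup.normalClosure (graphProductRels Γ Gv))).range = ⊤ :=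
    MonoidHom.range_eq_top.2 (QuotientGroup.mk'_surjective _)
  rw [eq_top_iff]
  rintro x -
  obtain ⟨y, rfl⟩ := QuotientGroup.mk'_surjective (Subgroup.normalClosure (graphProductRels Γ Gv)) x
  induction y using Monoid.CoprodI.induction_on with
  | one => exact one_mem _
  | of i m => exact of_mem_full (Set.mem_univ i) m
  | mul x y hx hy =>
    rw [map_mul]
    exact mul_mem hx hy

theorem ret_mem (S : Set V) (x : GraphProduct Γ Gv) : ret S x ∈ full Γ Gv S := by
  have : full Γ Gv Set.univ ≤ (full Γ Gv S).comap (ret S) := by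
    apply full_le
    intro v _ a
    rw [Subgroup.mem_comap]
    by_cases h : v ∈ S
    · rw [ret_of_mem h]; exact of_mem_full h a
    · rw [ret_of_notMem h]; exact one_mem _
  exact this (full_univ (Γ := Γ) (Gv := Gv) ▸ Subgroup.mem_top x)

theorem ret_mem_inter (S T : Set V) {x : GraphProduct Γ Gv} (h : x ∈ full Γ Gv T) :
    ret S x ∈ full Γ Gv (S ∩ T) := by
  rw [← ret_eq h, ret_ret]
  exact ret_mem _ _

theorem link_comm {v : V} {p x : GraphProduct Γ Gv} {S : Set V}
    (hp : p ∈ full Γ Gv (S ∩ Γ.neighborSet v)) (hx : x ∈ (of Γ Gv v).range) : p * x = x * p := by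
  have : full Γ Gv (S ∩ Γ.neighborSet v) ≤ Subgroup.centralizer {x} := by
    apply full_le
    intro u hu a
    rw [Subgroup.mem_centralizer_singleton_iff]
    obtain ⟨b, rfl⟩ := hx
    exact of_comm hu.2.symm a b
  exact Subgroup.mem_centralizer_singleton_iff.1 (this hp)

section Semi

variable (Γ Gv) (S : Set V) (v : V)

/-- The subgroup of `G_S` generated by the link of `v`. -/
abbrev linkSub : Subgroup (full Γ Gv S) :=
  (full Γ Gv (S ∩ Γ.neighborSet v)).subgroupOf (full Γ Gv S)

/-- Cosets of the link subgroup. -/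
abbrev Cos : Type := full Γ Gv S ⧸ linkSub Γ Gv S v

/-- Free product of copies of `G_v` indexed by cosets. -/
abbrev FP : Type := Monoid.CoprodI (fun _ : Cos Γ Gv S v => Gv v)

/-- The semidirect product. -/
abbrev SD : Type :=
  SemidirectProduct (FP Γ Gv S v) (full Γ Gv S)
    (reindexAct (X := Cos Γ Gv S v) (A := Gv v) (full Γ Gv S))

variable {Γ Gv S v}

theorem smul_base {u : V} (hS : u ∈ S) (hu : Γ.Adj v u) (a : Gv u) :
    (⟨of Γ Gv u a, of_mem_full hS a⟩ : full Γ Gv S) •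
      (QuotientGroup.mk 1 : Cos Γ Gv S v) = QuotientGroup.mk 1 := by
  change (QuotientGroup.mk _ : Cos Γ Gv S v) = _
  rw [QuotientGroup.eq]
  rw [Subgroup.mem_subgroupOf]
  simpa using of_mem_full (show u ∈ S ∩ Γ.neighborSet v from ⟨hS, hu⟩) a

variable (Γ Gv S v)

open Classical in
/-- Vertex maps into the semidirect product. -/
noncomputable def toSDv (u : V) : Gv u →* SD Γ Gv S v :=
  if hS : u ∈ S then
    SemidirectProduct.inr.comp ((of Γ Gv u).codRestrict (full Γ Gv S) (of_mem_full hS))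
  else if hv : u = v then
    SemidirectProduct.inl.comp
      (hv ▸ Monoid.CoprodI.of (M := fun _ : Cos Γ Gv S v => Gv v) (i := QuotientGroup.mk 1))
  else 1

variable {Γ Gv S v}

theorem toSDv_mem {u : V} (hS : u ∈ S) (a : Gv u) :
    toSDv Γ Gv S v u a = SemidirectProduct.inr ⟨of Γ Gv u a, of_mem_full hS a⟩ := by
  simp only [toSDv, dif_pos hS]
  rfl

theorem toSDv_self (hS : v ∉ S) (a : Gv v) :
    toSDv Γ Gv S v v a = SemidirectProduct.inl
      (Monoid.CoprodI.of (M := fun _ : Cos Γ Gv S v => Gv v) (i := QuotientGroup.mk 1) a) := by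
  simp only [toSDv, dif_neg hS, dif_pos]
  rfl

theorem toSDv_other {u : V} (hS : u ∉ S) (hu : u ≠ v) (a : Gv u) :
    toSDv Γ Gv S v u a = 1 := by
  simp only [toSDv, dif_neg hS, dif_neg hu]
  rfl

theorem toSD_aux {u : V} (hv : v ∉ S) (h : Γ.Adj v u) (a : Gv u) (b : Gv v) :
    toSDv Γ Gv S v u a * toSDv Γ Gv S v v b = toSDv Γ Gv S v v b * toSDv Γ Gv S v u a := by
  by_cases hu : u ∈ S
  · rw [toSDv_mem hu, toSDv_self hv, ← mul_inv_eq_iff_eq_mul,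
      ← map_inv SemidirectProduct.inr, ← SemidirectProduct.inl_aut]
    congr 1
    rw [reindexAct_of, smul_base hu h]
  · rw [toSDv_other hu (Γ.ne_of_adj h).symm]
    simp

/-- The map into the semidirect product. -/
noncomputable def toSD (hv : v ∉ S) : GraphProduct Γ Gv →* SD Γ Gv S v :=
  lift (toSDv Γ Gv S v) (by
    intro u u' h a b
    by_cases h1 : u = v
    · subst h1
      exact (toSD_aux hv h b a).symm
    by_cases h2 : u' = v
    · subst h2
      exact toSD_aux hv h.symm a b
    by_cases h3 : u ∈ S
    · by_cases h4 : u' ∈ S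
      · rw [toSDv_mem h3, toSDv_mem h4, ← map_mul, ← map_mul]
        congr 1
        exact Subtype.ext (of_comm h a b)
      · rw [toSDv_other h4 h2]; simp
    · rw [toSDv_other h3 h1]; simp)

theorem toSD_of (hv : v ∉ S) (u : V) (a : Gv u) :
    toSD (Γ := Γ) hv (of Γ Gv u a) = toSDv Γ Gv S v u a := lift_of _ _ _ _

/-- The map on the free product. -/
noncomputable def fromFP : FP Γ Gv S v →* GraphProduct Γ Gv :=
  Monoid.CoprodI.lift (fun i =>
    (MulAut.conj ((Quotient.out i : full Γ Gv S) : GraphProduct Γ Gv)).toMonoidHom.comp (of Γ Gv v))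

theorem fromFP_of (p : full Γ Gv S) (a : Gv v) :
    fromFP (Monoid.CoprodI.of (M := fun _ : Cos Γ Gv S v => Gv v) (i := QuotientGroup.mk p) a) =
      (p : GraphProduct Γ Gv) * of Γ Gv v a * (p : GraphProduct Γ Gv)⁻¹ := by
  obtain ⟨q, hq⟩ := QuotientGroup.mk_out_eq_mul (linkSub Γ Gv S v) p
  simp only [fromFP, Monoid.CoprodI.lift_of]
  change (((Quotient.out (QuotientGroup.mk p : Cos Γ Gv S v)) : full Γ Gv S) : GraphProduct Γ Gv)
    * of Γ Gv v a * (((Quotient.out (QuotientGroup.mk p : Cos Γ Gv S v)) : full Γ Gv S) :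
      GraphProduct Γ Gv)⁻¹ = _
  rw [hq]
  have hc := link_comm (Subgroup.mem_subgroupOf.1 q.2) (⟨a, rfl⟩ : of Γ Gv v a ∈ (of Γ Gv v).range)
  rw [Subgroup.coe_mul, mul_assoc (p : GraphProduct Γ Gv), hc]
  group

/-- The map back from the semidirect product. -/
noncomputable def fromSD : SD Γ Gv S v →* GraphProduct Γ Gv :=
  SemidirectProduct.lift fromFP (full Γ Gv S).subtype (by
    intro h
    apply Monoid.CoprodI.ext_hom
    intro i
    obtain ⟨p, rfl⟩ := QuotientGroup.mk_surjective i
    ext a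
    change fromFP (reindex _ (Monoid.CoprodI.of a)) = (h : GraphProduct Γ Gv) * fromFP _ * (h : GraphProduct Γ Gv)⁻¹
    rw [reindex_of]
    change fromFP (Monoid.CoprodI.of (M := fun _ : Cos Γ Gv S v => Gv v)
      (i := QuotientGroup.mk (h * p)) a) = _
    rw [fromFP_of, fromFP_of, Subgroup.coe_mul]
    group)

theorem fromSD_toSD (hv : v ∉ S) {x : GraphProduct Γ Gv} (hx : x ∈ full Γ Gv (insert v S)) :
    fromSD (toSD hv x) = x := by
  have : full Γ Gv (insert v S) ≤ ((fromSD).comp (toSD hv)).eqLocus (MonoidHom.id _) := by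
    apply full_le
    intro u hu a
    change fromSD (toSD hv _) = _
    rw [toSD_of]
    rcases hu with rfl | hu
    · rw [toSDv_self hv, fromSD, SemidirectProduct.lift_inl, fromFP_of]
      simp
    · rw [toSDv_mem hu, fromSD, SemidirectProduct.lift_inr]
      rfl
  exact this hx

theorem toSD_mem (hv : v ∉ S) (x : full Γ Gv S) :
    toSD hv (x : GraphProduct Γ Gv) = SemidirectProduct.inr x := by
  have : full Γ Gv S ≤ ((SemidirectProduct.inr.comp SemidirectProduct.rightHom).comp
      (toSD hv)).eqLocus (toSD hv) := by
    apply full_le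
    intro u hu a
    change SemidirectProduct.inr (SemidirectProduct.rightHom (toSD hv _)) = toSD hv _
    rw [toSD_of, toSDv_mem hu, SemidirectProduct.rightHom_inr]
  have h1 := this x.2
  change SemidirectProduct.inr (SemidirectProduct.rightHom (toSD hv _)) = toSD hv _ at h1
  have h2 : fromSD (toSD hv (x : GraphProduct Γ Gv)) = x :=
    fromSD_toSD hv (full_mono (Set.subset_insert _ _) x.2)
  rw [← h1] at h2 ⊢
  rw [fromSD, SemidirectProduct.lift_inr] at h2
  congr 1
  exact Subtype.ext h2

theorem toSD_right (hv : v ∉ S) (x : GraphProduct Γ Gv) :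
    (((toSD hv x).right : full Γ Gv S) : GraphProduct Γ Gv) = ret S x := by
  have : ((full Γ Gv S).subtype.comp SemidirectProduct.rightHom).comp (toSD hv) =
      ret (Γ := Γ) (Gv := Gv) S := by
    apply hom_ext'
    intro u a
    change (((toSD hv (of Γ Gv u a)).right : full Γ Gv S) : GraphProduct Γ Gv) = _
    rw [toSD_of]
    by_cases hu : u ∈ S
    · rw [toSDv_mem hu, ret_of_mem hu]; rfl
    · rw [ret_of_notMem hu]
      by_cases h : u = v
      · subst h; rw [toSDv_self hv]; rfl
      · rw [toSDv_other hu h]; rfl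
  exact DFunLike.congr_fun this x

/-- Centralizers in `G_S` of elements of the kernel of `G_{S ∪ v} → G_S`. -/
theorem centralizer_one (hv : v ∉ S) {k : GraphProduct Γ Gv} (hk : k ∈ full Γ Gv (insert v S))
    (hk1 : ret S k = 1) :
    ∃ l : List (GraphProduct Γ Gv), (∀ p ∈ l, p ∈ full Γ Gv S) ∧ ∀ x ∈ full Γ Gv S,
      (x * k = k * x ↔ ∀ p ∈ l, p⁻¹ * x * p ∈ full Γ Gv (S ∩ Γ.neighborSet v)) := by
  obtain ⟨l, hl⟩ := reindex_fix_iff (toSD hv k).left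
  refine ⟨l.map fun i => ((Quotient.out i : full Γ Gv S) : GraphProduct Γ Gv), ?_, ?_⟩
  · intro p hp
    rw [List.mem_map] at hp
    obtain ⟨i, -, rfl⟩ := hp
    exact Subtype.mem _
  intro x hx
  lift x to full Γ Gv S using hx
  have hk2 : toSD hv k = SemidirectProduct.inl (toSD hv k).left := by
    have : (toSD hv k).right = 1 := Subtype.ext (by rw [toSD_right, hk1]; rfl)
    ext
    · rfl
    · rw [this]; rfl
  have h1 : (x : GraphProduct Γ Gv) * k = k * x ↔
      toSD hv (x : GraphProduct Γ Gv) * toSD hv k = toSD hv k * toSD hv (x : GraphProduct Γ Gv) := by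
    constructor
    · intro h
      rw [← map_mul, h, map_mul]
    · intro h
      have := congrArg fromSD h
      rwa [map_mul, map_mul, fromSD_toSD hv hk,
        fromSD_toSD hv (full_mono (Set.subset_insert _ _) x.2)] at this
  have h2 := hl (MulAction.toPerm x)
  rw [h1, toSD_mem, hk2, ← mul_inv_eq_iff_eq_mul, ← map_inv, ← SemidirectProduct.inl_aut,
    SemidirectProduct.inl_inj]
  refine h2.trans ?_
  rw [List.forall_mem_map]
  refine forall₂_congr fun i _ => ?_
  have h3 : (QuotientGroup.mk (Quotient.out i) : Cos Γ Gv S v) = i := QuotientGroup.out_eq' i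
  conv_lhs => rw [← h3]
  change (QuotientGroup.mk (x * Quotient.out i) : Cos Γ Gv S v) = _ ↔ _
  rw [eq_comm, QuotientGroup.eq, Subgroup.mem_subgroupOf]
  simp [mul_assoc]

end Semi

/-- The claim, relative to a set of vertices, elementwise. -/
def Claim (Γ : SimpleGraph V) (Gv : V → Type) [∀ v, Group (Gv v)] (S : Set V) : Prop :=
  ∀ U W : Set V, U ⊆ S → W ⊆ S → ∀ g ∈ full Γ Gv S,
    ∃ P ⊆ U ∩ W, ∃ h ∈ full Γ Gv W, ∀ x : GraphProduct Γ Gv,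
      (g⁻¹ * x * g ∈ full Γ Gv U ∧ x ∈ full Γ Gv W) ↔ h⁻¹ * x * h ∈ full Γ Gv P

theorem list_inter {S T L : Set V} (hS : Claim Γ Gv S) (hT : T ⊆ S) (hL : L ⊆ S)
    (l : List (GraphProduct Γ Gv)) (hl : ∀ p ∈ l, p ∈ full Γ Gv S) :
    ∀ P ⊆ T, ∀ h ∈ full Γ Gv T, ∃ P' ⊆ T, ∃ h' ∈ full Γ Gv T, ∀ x : GraphProduct Γ Gv,
      (h⁻¹ * x * h ∈ full Γ Gv P ∧ ∀ p ∈ l, p⁻¹ * x * p ∈ full Γ Gv L) ↔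
        h'⁻¹ * x * h' ∈ full Γ Gv P' := by
  induction l with
  | nil =>
    intro P hP h hh
    exact ⟨P, hP, h, hh, by simp⟩
  | cons p l ih =>
    intro P hP h hh
    have hp := hl p (by simp)
    obtain ⟨P1, hP1, h1, hh1, H⟩ := hS L P hL (hP.trans hT) (h⁻¹ * p)
      (mul_mem (inv_mem (full_mono hT hh)) hp)
    obtain ⟨P', hP', h', hh', H'⟩ := ih (fun q hq => hl q (by simp [hq])) P1
      (fun a ha => hP (hP1 ha).2) (h * h1) (mul_mem hh (full_mono hP hh1))
    refine ⟨P', hP', h', hh', fun x => ?_⟩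
    rw [← H', List.forall_mem_cons]
    have := H (h⁻¹ * x * h)
    have e1 : (h⁻¹ * p)⁻¹ * (h⁻¹ * x * h) * (h⁻¹ * p) = p⁻¹ * x * p := by group
    have e2 : (h * h1)⁻¹ * x * (h * h1) = h1⁻¹ * (h⁻¹ * x * h) * h1 := by group
    rw [e1] at this
    rw [e2, ← this]
    tauto

theorem centralizer_gen {S T : Set V} (IH : ∀ S' < S, Claim Γ Gv S') (hT : T ⊆ S)
    {k : GraphProduct Γ Gv} (hk : k ∈ full Γ Gv S) (hk1 : ret T k = 1) :
    ∃ P ⊆ T, ∃ h ∈ full Γ Gv T, ∀ x : GraphProduct Γ Gv,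
      (x ∈ full Γ Gv T ∧ x * k = k * x) ↔ h⁻¹ * x * h ∈ full Γ Gv P := by
  by_cases hST : T = S
  · subst hST
    rw [ret_eq hk] at hk1
    exact ⟨T, le_rfl, 1, one_mem _, by simp [hk1]⟩
  obtain ⟨v, hvS, hvT⟩ := Set.exists_of_ssubset (hT.ssubset_of_ne hST)
  have hS0 : Claim Γ Gv (S \ {v}) := IH _ (Set.sdiff_singleton_ssubset.2 hvS)
  have hT0 : T ⊆ S \ {v} := Set.subset_sdiff_singleton hT hvT
  have hv0 : v ∉ S \ {v} := by simp
  have hins : insert v (S \ {v}) = S := by simp [hvS]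
  set S0 := S \ {v}
  set k1 := ret S0 k with hk1def
  have hk1m : k1 ∈ full Γ Gv S0 := ret_mem _ _
  have hk1T : ret T k1 = 1 := by
    rw [hk1def, ret_ret, Set.inter_eq_left.2 hT0, hk1]
  obtain ⟨P1, hP1, h1, hh1, H1⟩ := hS0 T T hT0 hT0 k1 hk1m
  obtain ⟨l, hl, Hl⟩ := centralizer_one (Γ := Γ) (Gv := Gv) hv0 (k := k * k1⁻¹)
    (by rw [hins]; exact mul_mem hk (inv_mem (full_mono Set.sdiff_subset hk1m)))
    (by rw [map_mul, map_inv, ret_eq hk1m]; simp [k1])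
  obtain ⟨P, hP, h, hh, H⟩ := list_inter hS0 hT0 Set.inter_subset_left l hl P1
    (fun a ha => (hP1 ha).1) h1 hh1
  refine ⟨P, hP, h, hh, fun x => ?_⟩
  rw [← H, ← H1]
  constructor
  · rintro ⟨hx, hxk⟩
    have hx0 := full_mono hT0 hx
    have h3 : x * k1 = k1 * x := by
      have := congrArg (ret S0) hxk
      rwa [map_mul, map_mul, ret_eq hx0] at this
    refine ⟨⟨?_, hx⟩, ?_⟩
    · rw [mul_assoc, h3]
      simpa using hx
    · rw [← Hl x hx0]
      have h4 : Commute x (k * k1⁻¹) := Commute.mul_right hxk (Commute.inv_right h3)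
      exact h4
  · rintro ⟨⟨h3, hx⟩, h4⟩
    have hx0 := full_mono hT0 hx
    refine ⟨hx, ?_⟩
    rw [← Hl x hx0] at h4
    have h5 := ret_eq h3
    rw [map_mul, map_mul, map_inv, hk1T, ret_eq hx] at h5
    have h6 : Commute x k1 := by
      have : k1 * x = k1 * (k1⁻¹ * x * k1) := by rw [← h5]; simp
      change x * k1 = k1 * x
      rw [this]; group
    have h7 : Commute x (k * k1⁻¹ * k1) := Commute.mul_right h4 h6
    simpa using h7.eq

theorem claim_step {S : Set V} (IH : ∀ S' < S, Claim Γ Gv S') : Claim Γ Gv S := by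
  intro U W hU hW g hg
  have hcomm : ∀ y : GraphProduct Γ Gv, ret W (ret U y) = ret U (ret W y) := by
    intro y
    rw [ret_ret, ret_ret, Set.inter_comm]
  set h := ret W g with hdef
  have hh : h ∈ full Γ Gv W := ret_mem _ _
  set g' := h⁻¹ * g with g'def
  have hg'W : ret W g' = 1 := by
    rw [g'def, map_mul, map_inv, ret_eq hh]; simp [h]
  have hg' : g' ∈ full Γ Gv S := mul_mem (inv_mem (full_mono hW hh)) hg
  set r := ret U g' with rdef
  have hr : r ∈ full Γ Gv U := ret_mem _ _
  have hrS : r ∈ full Γ Gv S := full_mono hU hr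
  obtain ⟨k, hkdef⟩ : ∃ k, k = g' * r⁻¹ := ⟨_, rfl⟩
  have hkU : ret U k = 1 := by
    rw [hkdef, map_mul, map_inv, ret_eq hr]; simp [r]
  have hkW : ret W k = 1 := by
    rw [hkdef, map_mul, map_inv, hg'W, rdef, hcomm, hg'W]; simp
  have hkT : ret (U ∩ W) k = 1 := by
    rw [← ret_ret, hkW, map_one]
  have hkS : k ∈ full Γ Gv S := hkdef ▸ mul_mem hg' (inv_mem hrS)
  obtain ⟨P, hP, h', hh', H⟩ := centralizer_gen IH (T := U ∩ W)
    (Set.inter_subset_left.trans hU) hkS hkT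
  refine ⟨P, hP, h * h', mul_mem hh (full_mono Set.inter_subset_right hh'), fun x => ?_⟩
  have e2 : (h * h')⁻¹ * x * (h * h') = h'⁻¹ * (h⁻¹ * x * h) * h' := by group
  rw [e2, ← H]
  have hgk : g = h * k * r := by rw [hkdef, g'def]; group
  obtain ⟨y, hy⟩ : ∃ y, y = h⁻¹ * x * h := ⟨_, rfl⟩
  have hx : x = h * y * h⁻¹ := by rw [hy]; group
  rw [← hy]
  have e3 : g⁻¹ * x * g = r⁻¹ * (k⁻¹ * y * k) * r := by rw [hgk, hx]; group
  rw [e3]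
  constructor
  · rintro ⟨h1, h2⟩
    have hyW : y ∈ full Γ Gv W := hy ▸ mul_mem (mul_mem (inv_mem hh) h2) hh
    obtain ⟨u, hu⟩ : ∃ u, u = k⁻¹ * y * k := ⟨_, rfl⟩
    have huU : u ∈ full Γ Gv U := by
      have := mul_mem (mul_mem hr h1) (inv_mem hr)
      rw [hu]
      convert this using 1
      group
    have h3 : ret W u = y := by
      rw [hu, map_mul, map_mul, map_inv, hkW, ret_eq hyW]; simp
    have hyT : y ∈ full Γ Gv (U ∩ W) := by
      rw [← h3, Set.inter_comm]
      exact ret_mem_inter _ _ huU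
    have h4 : u = y := by
      rw [← ret_eq huU, hu, map_mul, map_mul, map_inv, hkU,
        ret_eq (full_mono Set.inter_subset_left hyT)]; simp
    refine ⟨hyT, ?_⟩
    have h5 : k * y = k * (k⁻¹ * y * k) := by rw [← hu, h4]
    rw [h5]; group
  · rintro ⟨hyT, hc⟩
    have h5 : k⁻¹ * y * k = y := by rw [mul_assoc, hc]; group
    rw [h5]
    have hyU := full_mono (Γ := Γ) (Gv := Gv) Set.inter_subset_left hyT
    have hyW := full_mono (Γ := Γ) (Gv := Gv) Set.inter_subset_right hyT
    exact ⟨mul_mem (mul_mem (inv_mem hr) hyU) hr, hx ▸ mul_mem (mul_mem hh hyW) (inv_mem hh)⟩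

theorem claim_all (S : Set V) : Claim Γ Gv S := by
  induction S using WellFoundedLT.induction with
  | ind S IH => exact claim_step IH

end GraphProduct

theorem mem_conjSubgroup_iff {G : Type*} [Group G] (g : G) (H : Subgroup G) (x : G) :
    x ∈ conjSubgroup g H ↔ g⁻¹ * x * g ∈ H := by
  rw [conjSubgroup, Subgroup.mem_map]
  constructor
  · rintro ⟨y, hy, rfl⟩
    simpa [mul_assoc] using hy
  · intro h
    exact ⟨_, h, by simp [mul_assoc]⟩

/-- In a graph product, the intersection of a conjugate of a full subgroup with a full
subgroup is a conjugate, by an element of the second, of a full subgroup on a subset of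
the intersection of the vertex sets. -/
theorem conj_full_inter_full {V : Type} [Fintype V] (Γ : SimpleGraph V) (Gv : V → Type)
    [∀ v, Group (Gv v)] (U W : Set V) (g : GraphProduct Γ Gv) :
    ∃ P ⊆ U ∩ W, ∃ h ∈ GraphProduct.full Γ Gv W,
      conjSubgroup g (GraphProduct.full Γ Gv U) ⊓ GraphProduct.full Γ Gv W =
        conjSubgroup h (GraphProduct.full Γ Gv P) := by
  obtain ⟨P, hP, h, hh, H⟩ := GraphProduct.claim_all (Γ := Γ) (Gv := Gv) Set.univ U W
    (Set.subset_univ _) (Set.subset_univ _) g (by rw [GraphProduct.full_univ]; trivial)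
  refine ⟨P, hP, h, hh, ?_⟩
  ext x
  rw [Subgroup.mem_inf, mem_conjSubgroup_iff, mem_conjSubgroup_iff]
  exact H x
end

section
/- Let G = GP(Γ, 𝒢) be a non-degenerate graph product of groups. Suppose U ⊆ V(Γ) and g, x, y ∈ G are such that x ≠ 1, gxg⁻¹ = y, supp(y) ⊆ U, and no reduced word for g ends with a syllable whose vertex lies in supp(x). Then g can be written as a reduced word (h₁,...,h_r,h_{r+1},...,h_n) with h₁,...,h_r ∈ G_U and h_{r+1},...,h_n ∈ G_{link(supp(x))}. -/
section Words

variable {V : Type} [Fintype V] (Γ : SimpleGraph V) (Gv : V → Type) [∀ v, Group (Gv v)]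

/-- The element of the graph product represented by a word, i.e. a list of syllables. -/
def GraphProduct.wordProd (w : List (Σ v : V, Gv v)) : GraphProduct Γ Gv :=
  (w.map fun s => GraphProduct.of Γ Gv s.1 s.2).prod

/-- A word is reduced for `g` if it represents `g`, has no trivial syllables, and has
minimal length among all words representing `g` (equivalently, by Green's normal form
theorem, no two of its syllables can be joined together). -/
def GraphProduct.IsReducedWord (w : List (Σ v : V, Gv v)) (g : GraphProduct Γ Gv) : Prop :=
  GraphProduct.wordProd Γ Gv w = g ∧ (∀ s ∈ w, s.2 ≠ 1) ∧
    ∀ w' : List (Σ v : V, Gv v), GraphProduct.wordProd Γ Gv w' = g → w.length ≤ w'.length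

/-- The support of `g`: the set of vertices whose vertex groups contribute a syllable
to some reduced word for `g`. -/
def GraphProduct.supp (g : GraphProduct Γ Gv) : Set V :=
  {v | ∃ w, GraphProduct.IsReducedWord Γ Gv w g ∧ ∃ s ∈ w, s.1 = v}

/-- The link of a set of vertices: the set of vertices adjacent to every vertex of the
set. -/
def SimpleGraph.linkSet (S : Set V) : Set V := {u | ∀ v ∈ S, Γ.Adj u v}

end Words

set_option linter.unusedSectionVars false

namespace GPAux

open Classical GraphProduct

variable {V : Type} [Fintype V] (Γ : SimpleGraph V) {Gv : V → Type} [∀ v, Group (Gv v)]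

/-- Vertices of syllables that can be shuffled to the front. -/
def Ls : List (Σ v : V, Gv v) → Set V
  | [] => ∅
  | s :: w => {v | v = s.1 ∨ (Γ.Adj s.1 v ∧ v ∈ Ls w)}

/-- Combinatorially reduced words. -/
def Red : List (Σ v : V, Gv v) → Prop
  | [] => True
  | s :: w => s.2 ≠ 1 ∧ s.1 ∉ Ls Γ w ∧ Red w

/-- Shuffle equivalence. -/
inductive Sh : List (Σ v : V, Gv v) → List (Σ v : V, Gv v) → Prop
  | refl (w) : Sh w w
  | swap (s t w) (h : Γ.Adj s.1 t.1) : Sh (s :: t :: w) (t :: s :: w)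
  | cons (s) {w w'} (h : Sh w w') : Sh (s :: w) (s :: w')
  | symm {w w'} (h : Sh w w') : Sh w' w
  | trans {w w' w''} (h : Sh w w') (h' : Sh w' w'') : Sh w w''

/-- Extract the syllable at `v` from the front of a word, if there is one. -/
noncomputable def pull (v : V) : List (Σ v : V, Gv v) → Gv v × List (Σ v : V, Gv v)
  | [] => (1, [])
  | s :: w => if h : s.1 = v then (h ▸ s.2, w)
      else if Γ.Adj s.1 v ∧ v ∈ Ls Γ w then ((pull v w).1, s :: (pull v w).2) else (1, s :: w)

/-- Add a possibly trivial syllable. -/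
noncomputable def cons' (v : V) (a : Gv v) (w : List (Σ v : V, Gv v)) : List (Σ v : V, Gv v) :=
  if a = 1 then w else ⟨v, a⟩ :: w

noncomputable def act (v : V) (b : Gv v) (w : List (Σ v : V, Gv v)) : List (Σ v : V, Gv v) :=
  cons' v (b * (pull Γ v w).1) (pull Γ v w).2

variable {Γ}

lemma Sh.perm {w w' : List (Σ v : V, Gv v)} (h : Sh Γ w w') : w.Perm w' := by
  induction h with
  | refl => exact List.Perm.refl _
  | swap s t w h => exact List.Perm.swap _ _ _
  | cons s h ih => exact ih.cons _
  | symm h ih => exact ih.symm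
  | trans h h' ih ih' => exact ih.trans ih'

lemma Sh.Ls_eq {w w' : List (Σ v : V, Gv v)} (h : Sh Γ w w') : Ls Γ w = Ls Γ w' := by
  induction h with
  | refl => rfl
  | swap s t w h =>
    ext v
    have := h.symm
    simp only [Ls, Set.mem_setOf_eq]
    constructor
    · rintro (rfl | ⟨h1, rfl | h2⟩) <;> tauto
    · rintro (rfl | ⟨h1, rfl | h2⟩) <;> tauto
  | cons s h ih => simp only [Ls, ih]
  | symm h ih => exact ih.symm
  | trans h h' ih ih' => exact ih.trans ih'

lemma Sh.red_iff {w w' : List (Σ v : V, Gv v)} (h : Sh Γ w w') : Red Γ w ↔ Red Γ w' := by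
  induction h with
  | refl => rfl
  | swap s t w h =>
    have h1 := h.symm
    have h2 := h.ne
    have h3 := h.ne'
    simp only [Red, Ls, Set.mem_setOf_eq]
    tauto
  | cons s h ih => simp only [Red, ih, h.Ls_eq]
  | symm h ih => exact ih.symm
  | trans h h' ih ih' => exact ih.trans ih'

lemma of_comm {u v : V} (h : Γ.Adj u v) (a : Gv u) (b : Gv v) :
    GraphProduct.of Γ Gv u a * GraphProduct.of Γ Gv v b =
      GraphProduct.of Γ Gv v b * GraphProduct.of Γ Gv u a := by
  have : GraphProduct.of Γ Gv u a * GraphProduct.of Γ Gv v b *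
      (GraphProduct.of Γ Gv u a)⁻¹ * (GraphProduct.of Γ Gv v b)⁻¹ = 1 := by
    have hm : Monoid.CoprodI.of a * Monoid.CoprodI.of b *
      (Monoid.CoprodI.of a)⁻¹ * (Monoid.CoprodI.of b)⁻¹ ∈
        Subgroup.normalClosure (graphProductRels Γ Gv) :=
      Subgroup.subset_normalClosure ⟨u, v, h, a, b, rfl⟩
    exact (QuotientGroup.eq_one_iff _).2 hm
  rw [mul_inv_eq_one, mul_inv_eq_iff_eq_mul] at this
  exact this

lemma wp_nil : wordProd Γ Gv [] = 1 := rfl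

lemma wp_cons (s : Σ v : V, Gv v) (w) :
    wordProd Γ Gv (s :: w) = GraphProduct.of Γ Gv s.1 s.2 * wordProd Γ Gv w := by
  simp [wordProd]

lemma wp_append (w w' : List (Σ v : V, Gv v)) :
    wordProd Γ Gv (w ++ w') = wordProd Γ Gv w * wordProd Γ Gv w' := by
  simp [wordProd]

lemma Sh.wp {w w' : List (Σ v : V, Gv v)} (h : Sh Γ w w') :
    wordProd Γ Gv w = wordProd Γ Gv w' := by
  induction h with
  | refl => rfl
  | swap s t w h => simp only [wp_cons, ← mul_assoc, of_comm h]
  | cons s h ih => simp only [wp_cons, ih]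
  | symm h ih => exact ih.symm
  | trans h h' ih ih' => exact ih.trans ih'

lemma pull_of_notMem {v : V} {w : List (Σ v : V, Gv v)} (h : v ∉ Ls Γ w) :
    pull Γ v w = (1, w) := by
  cases w with
  | nil => rfl
  | cons s w =>
    simp only [Ls, Set.mem_setOf_eq, not_or] at h
    rw [pull, dif_neg (fun e => h.1 e.symm), if_neg h.2]

lemma pull_cons_self (v : V) (a : Gv v) (w : List (Σ v : V, Gv v)) :
    pull Γ v (⟨v, a⟩ :: w) = (a, w) := by
  simp [pull]

lemma pull_cons' {v : V} (a : Gv v) {w : List (Σ v : V, Gv v)} (h : v ∉ Ls Γ w) :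
    pull Γ v (cons' v a w) = (a, w) := by
  unfold cons'
  split_ifs with h1
  · rw [pull_of_notMem h, h1]
  · exact pull_cons_self _ _ _

lemma Sh.pull (v : V) {w w' : List (Σ v : V, Gv v)} (h : Sh Γ w w') :
    (pull Γ v w).1 = (GPAux.pull Γ v w').1 ∧ Sh Γ (GPAux.pull Γ v w).2 (GPAux.pull Γ v w').2 := by
  induction h with
  | refl => exact ⟨rfl, .refl _⟩
  | swap s t w h =>
    obtain ⟨s, a⟩ := s
    obtain ⟨t, b⟩ := t
    simp only at h
    have h1 := h.symm
    have h2 := h.ne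
    have h3 := h.ne'
    by_cases hs : s = v
    · subst hs
      simp [GPAux.pull, Ls, h3, h1, Sh.refl]
    · by_cases ht : t = v
      · subst ht
        simp [GPAux.pull, Ls, h2, h, Sh.refl]
      · by_cases hl : v ∈ Ls Γ w
        · by_cases h4 : Γ.Adj s v <;> by_cases h5 : Γ.Adj t v <;>
            simp [GPAux.pull, Ls, hs, ht, Ne.symm hs, Ne.symm ht, hl, h4, h5, Sh.swap, h]
        · simp [GPAux.pull, Ls, hs, ht, Ne.symm hs, Ne.symm ht, hl, Sh.swap, h]
  | cons s h ih =>
    obtain ⟨s, a⟩ := s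
    by_cases hs : s = v
    · subst hs
      simpa [GPAux.pull] using h
    · simp only [GPAux.pull, dif_neg hs, h.Ls_eq]
      split_ifs
      · exact ⟨ih.1, ih.2.cons _⟩
      · exact ⟨rfl, h.cons _⟩
  | symm h ih => exact ⟨ih.1.symm, ih.2.symm⟩
  | trans h h' ih ih' => exact ⟨ih.1.trans ih'.1, ih.2.trans ih'.2⟩

lemma Sh.cons' (v : V) (a : Gv v) {w w' : List (Σ v : V, Gv v)} (h : Sh Γ w w') :
    Sh Γ (cons' v a w) (GPAux.cons' v a w') := by
  unfold GPAux.cons'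
  split_ifs
  · exact h
  · exact h.cons _

lemma Sh.act (v : V) (b : Gv v) {w w' : List (Σ v : V, Gv v)} (h : Sh Γ w w') :
    Sh Γ (act Γ v b w) (GPAux.act Γ v b w') := by
  unfold GPAux.act
  rw [(h.pull v).1]
  exact (h.pull v).2.cons' _ _

lemma Sh.of_mem {v : V} {w : List (Σ v : V, Gv v)} (h : v ∈ Ls Γ w) :
    ∃ a w', Sh Γ w (⟨v, a⟩ :: w') := by
  induction w with
  | nil => exact h.elim
  | cons s w ih =>
    rcases h with rfl | ⟨h1, h2⟩
    · exact ⟨s.2, w, .refl _⟩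
    · obtain ⟨a, w', h3⟩ := ih h2
      exact ⟨a, s :: w', (h3.cons s).trans (.swap _ _ _ h1)⟩

/-- decomposition of a reduced word -/
lemma decomp (v : V) {w : List (Σ v : V, Gv v)} (h : Red Γ w) :
    ∃ a w', Sh Γ w (cons' v a w') ∧ Red Γ w' ∧ v ∉ Ls Γ w' := by
  by_cases hv : v ∈ Ls Γ w
  · obtain ⟨a, w', h1⟩ := Sh.of_mem hv
    have h2 := h1.red_iff.1 h
    refine ⟨a, w', ?_, h2.2.2, h2.2.1⟩
    rw [cons', if_neg h2.1]
    exact h1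
  · exact ⟨1, w, by simp [cons', Sh.refl], h, hv⟩

lemma red_cons' {v : V} (a : Gv v) {w : List (Σ v : V, Gv v)} (h : Red Γ w) (hv : v ∉ Ls Γ w) :
    Red Γ (cons' v a w) := by
  unfold cons'
  split_ifs with h1
  · exact h
  · exact ⟨h1, hv, h⟩

lemma act_cons' {v : V} (a b : Gv v) {w : List (Σ v : V, Gv v)} (hv : v ∉ Ls Γ w) :
    act Γ v b (cons' v a w) = cons' v (b * a) w := by
  simp [act, pull_cons' a hv]

lemma notMem_cons' {u v : V} (a : Gv u) {w : List (Σ v : V, Gv v)} (hv : v ∉ Ls Γ w)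
    (h : u ≠ v) : v ∉ Ls Γ (cons' u a w) := by
  unfold cons'
  split_ifs with h1
  · exact hv
  · simp [Ls, hv, h.symm]

lemma sh_cons'_swap {u v : V} (h : Γ.Adj u v) (a : Gv u) (b : Gv v) (w) :
    Sh Γ (cons' u a (cons' v b w)) (cons' v b (cons' u a w)) := by
  unfold cons'
  split_ifs
  · exact .refl _
  · exact .refl _
  · exact .refl _
  · exact .swap _ _ _ h

lemma red_act (v : V) (b : Gv v) {w : List (Σ v : V, Gv v)} (h : Red Γ w) :
    Red Γ (act Γ v b w) := by
  obtain ⟨a, w', h1, h2, h3⟩ := decomp v h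
  rw [(h1.act v b).red_iff, act_cons' _ _ h3]
  exact red_cons' _ h2 h3

lemma act_one (v : V) {w : List (Σ v : V, Gv v)} (h : Red Γ w) :
    Sh Γ (act Γ v 1 w) w := by
  obtain ⟨a, w', h1, h2, h3⟩ := decomp v h
  refine (h1.act v 1).trans (.trans ?_ h1.symm)
  rw [act_cons' _ _ h3, one_mul]
  exact .refl _

lemma act_mul (v : V) (b c : Gv v) {w : List (Σ v : V, Gv v)} (h : Red Γ w) :
    Sh Γ (act Γ v (b * c) w) (act Γ v b (act Γ v c w)) := by
  obtain ⟨a, w', h1, h2, h3⟩ := decomp v h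
  refine (h1.act v _).trans (.trans ?_ ((h1.act v c).act v b).symm)
  rw [act_cons' _ _ h3, act_cons' _ _ h3, act_cons' _ _ h3, mul_assoc]
  exact .refl _

lemma act_comm {u v : V} (huv : Γ.Adj u v) (b : Gv u) (c : Gv v)
    {w : List (Σ v : V, Gv v)} (h : Red Γ w) :
    Sh Γ (act Γ u b (act Γ v c w)) (act Γ v c (act Γ u b w)) := by
  obtain ⟨a, w1, h1, h2, h3⟩ := decomp u h
  obtain ⟨d, w2, h4, h5, h6⟩ := decomp v h2
  have h7 : u ∉ Ls Γ w2 := by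
    rw [h4.Ls_eq] at h3
    intro h8
    apply h3
    unfold cons'
    split_ifs
    · exact h8
    · exact Or.inr ⟨huv.symm, h8⟩
  have h9 : Sh Γ w (cons' u a (cons' v d w2)) := h1.trans (h4.cons' u a)
  have hu : ∀ d, u ∉ Ls Γ (cons' v d w2) := fun d => notMem_cons' d h7 huv.ne'
  have hv : ∀ a, v ∉ Ls Γ (cons' u a w2) := fun a => notMem_cons' a h6 huv.ne
  have e1 : Sh Γ (act Γ v c w) (cons' u a (cons' v (c * d) w2)) := by
    refine ((h9.trans (sh_cons'_swap huv _ _ _)).act v c).trans ?_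
    rw [act_cons' _ _ (hv _)]
    exact sh_cons'_swap huv.symm _ _ _
  have e2 : Sh Γ (act Γ u b w) (cons' v d (cons' u (b * a) w2)) := by
    refine (h9.act u b).trans ?_
    rw [act_cons' _ _ (hu _)]
    exact sh_cons'_swap huv _ _ _
  refine (e1.act u b).trans (.trans ?_ (e2.act v c).symm)
  rw [act_cons' _ _ (hu _), act_cons' _ _ (hv _)]
  exact sh_cons'_swap huv _ _ _

variable (Γ Gv)

/-- Setoid of shuffles on reduced words -/
def shSetoid : Setoid {w : List (Σ v : V, Gv v) // Red Γ w} where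
  r a b := Sh Γ a.1 b.1
  iseqv := ⟨fun _ => .refl _, fun h => h.symm, fun h h' => h.trans h'⟩

/-- Normal forms -/
def NF : Type := Quotient (shSetoid Γ Gv)

/-- action on normal forms -/
noncomputable def nfAct (v : V) (b : Gv v) : NF Γ Gv → NF Γ Gv :=
  Quotient.map (fun w => ⟨act Γ v b w.1, red_act v b w.2⟩) (fun _ _ h => Sh.act v b h)

lemma nfAct_one (v : V) (x : NF Γ Gv) : nfAct Γ Gv v 1 x = x := by
  induction x using Quotient.inductionOn with
  | _ w => exact Quotient.sound (act_one v w.2)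

lemma nfAct_mul (v : V) (b c : Gv v) (x : NF Γ Gv) :
    nfAct Γ Gv v (b * c) x = nfAct Γ Gv v b (nfAct Γ Gv v c x) := by
  induction x using Quotient.inductionOn with
  | _ w => exact Quotient.sound (act_mul v b c w.2)

lemma nfAct_comm {u v : V} (h : Γ.Adj u v) (b : Gv u) (c : Gv v) (x : NF Γ Gv) :
    nfAct Γ Gv u b (nfAct Γ Gv v c x) = nfAct Γ Gv v c (nfAct Γ Gv u b x) := by
  induction x using Quotient.inductionOn with
  | _ w => exact Quotient.sound (act_comm h b c w.2)

/-- the action of a vertex group -/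
noncomputable def permHom (v : V) : Gv v →* Equiv.Perm (NF Γ Gv) where
  toFun b := ⟨nfAct Γ Gv v b, nfAct Γ Gv v b⁻¹,
    fun x => by rw [← nfAct_mul, inv_mul_cancel, nfAct_one],
    fun x => by rw [← nfAct_mul, mul_inv_cancel, nfAct_one]⟩
  map_one' := Equiv.ext (nfAct_one Γ Gv v)
  map_mul' b c := Equiv.ext (nfAct_mul Γ Gv v b c)

/-- the action of the graph product -/
noncomputable def gpHom : GraphProduct Γ Gv →* Equiv.Perm (NF Γ Gv) :=
  QuotientGroup.lift (Subgroup.normalClosure (graphProductRels Γ Gv))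
    (Monoid.CoprodI.lift (permHom Γ Gv)) (by
      have : Subgroup.normalClosure (graphProductRels Γ Gv) ≤
          (Monoid.CoprodI.lift (permHom Γ Gv)).ker := by
        apply Subgroup.normalClosure_le_normal
        rintro _ ⟨u, v, h, a, b, rfl⟩
        simp only [SetLike.mem_coe, MonoidHom.mem_ker, map_mul, map_inv, Monoid.CoprodI.lift_of]
        rw [mul_inv_eq_one, mul_inv_eq_iff_eq_mul]
        exact Equiv.ext (nfAct_comm Γ Gv h a b)
      exact this)

lemma gpHom_of (v : V) (b : Gv v) (x : NF Γ Gv) :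
    gpHom Γ Gv (GraphProduct.of Γ Gv v b) x = nfAct Γ Gv v b x := by
  have : gpHom Γ Gv (GraphProduct.of Γ Gv v b) = permHom Γ Gv v b :=
    Monoid.CoprodI.lift_of (fi := permHom Γ Gv) b
  rw [this]; rfl

variable {Γ Gv}

/-- class of a reduced word -/
def nf (w : List (Σ v : V, Gv v)) (h : Red Γ w) : NF Γ Gv := Quotient.mk (shSetoid Γ Gv) ⟨w, h⟩

lemma gpHom_wp (w : List (Σ v : V, Gv v)) (h : Red Γ w) :
    gpHom Γ Gv (wordProd Γ Gv w) (nf [] trivial) = nf w h := by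
  induction w with
  | nil => rw [wp_nil, map_one]; rfl
  | cons s w ih =>
    rw [wp_cons, map_mul, Equiv.Perm.mul_apply, ih h.2.2, gpHom_of]
    apply Quotient.sound
    show Sh Γ (act Γ s.1 s.2 w) (s :: w)
    rw [act, pull_of_notMem h.2.1, mul_one, cons', if_neg h.1]
    exact .refl _

/-- Normal form theorem of Green -/
lemma Sh.of_wp {w w' : List (Σ v : V, Gv v)} (h : Red Γ w) (h' : Red Γ w')
    (e : wordProd Γ Gv w = wordProd Γ Gv w') : Sh Γ w w' := by
  have := gpHom_wp w h
  rw [e, gpHom_wp w' h'] at this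
  exact (Quotient.exact this).symm

lemma act_spec (v : V) (b : Gv v) {w : List (Σ v : V, Gv v)} (h : Red Γ w) :
    ∃ w', Red Γ w' ∧ wordProd Γ Gv w' = GraphProduct.of Γ Gv v b * wordProd Γ Gv w ∧
      w'.length ≤ w.length + 1 ∧ (v ∈ Ls Γ w → w'.length ≤ w.length) ∧
      ∀ s ∈ w', s.1 = v ∨ ∃ t ∈ w, t.1 = s.1 := by
  by_cases hv : v ∈ Ls Γ w
  · obtain ⟨a, w', h1⟩ := Sh.of_mem hv
    have h2 := h1.red_iff.1 h
    have hp := h1.perm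
    have hl := hp.length_eq
    simp only [List.length_cons] at hl
    refine ⟨cons' v (b * a) w', red_cons' _ h2.2.2 h2.2.1, ?_, ?_, ?_, ?_⟩
    · rw [h1.wp, wp_cons, ← mul_assoc, ← map_mul, cons']
      split_ifs with h3
      · rw [h3, map_one, one_mul]
      · rw [wp_cons]
    · unfold cons'; split_ifs <;> (try simp only [List.length_cons]) <;> omega
    · unfold cons'; split_ifs <;> (try simp only [List.length_cons]) <;> omega
    · intro s hs
      have : s.1 = v ∨ s ∈ w' := by
        unfold cons' at hs
        split_ifs at hs
        · exact .inr hs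
        · rcases List.mem_cons.1 hs with rfl | h
          · exact .inl rfl
          · exact .inr h
      rcases this with h | h
      · exact .inl h
      · exact .inr ⟨s, hp.mem_iff.2 (List.mem_cons_of_mem _ h), rfl⟩
  · refine ⟨cons' v b w, red_cons' _ h hv, ?_, ?_, fun h => (hv h).elim, ?_⟩
    · unfold cons'
      split_ifs with h3
      · rw [h3, map_one, one_mul]
      · rw [wp_cons]
    · unfold cons'; split_ifs <;> simp
    · intro s hs
      unfold cons' at hs
      split_ifs at hs
      · exact .inr ⟨s, hs, rfl⟩
      · rcases List.mem_cons.1 hs with rfl | h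
        · exact .inl rfl
        · exact .inr ⟨s, h, rfl⟩

lemma exists_red (w : List (Σ v : V, Gv v)) :
    ∃ w', Red Γ w' ∧ wordProd Γ Gv w' = wordProd Γ Gv w ∧ w'.length ≤ w.length ∧
      (¬ Red Γ w → w'.length < w.length) ∧ ∀ s ∈ w', ∃ t ∈ w, t.1 = s.1 := by
  induction w with
  | nil => exact ⟨[], trivial, rfl, le_rfl, fun h => (h trivial).elim, by simp⟩
  | cons s w ih =>
    obtain ⟨w1, h1, h2, h3, h4, h5⟩ := ih
    by_cases hs : s.2 = 1
    · refine ⟨w1, h1, ?_, ?_, ?_, ?_⟩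
      · rw [wp_cons, hs, map_one, one_mul, h2]
      · simp; omega
      · simp; omega
      · intro t ht
        obtain ⟨r, hr, e⟩ := h5 t ht
        exact ⟨r, List.mem_cons_of_mem _ hr, e⟩
    · obtain ⟨w2, g1, g2, g3, g4, g5⟩ := act_spec s.1 s.2 h1
      refine ⟨w2, g1, ?_, ?_, ?_, ?_⟩
      · rw [g2, h2, wp_cons]
      · simp; omega
      · intro hn
        by_cases hw : Red Γ w
        · have hsh := Sh.of_wp h1 hw h2
          have : s.1 ∈ Ls Γ w := by
            by_contra hc
            exact hn ⟨hs, hc, hw⟩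
          rw [← hsh.Ls_eq] at this
          have := g4 this
          simp; omega
        · have := h4 hw
          simp; omega
      · intro t ht
        rcases g5 t ht with h | ⟨r, hr, e⟩
        · exact ⟨s, List.mem_cons_self, h.symm⟩
        · obtain ⟨r', hr', e'⟩ := h5 r hr
          exact ⟨r', List.mem_cons_of_mem _ hr', e'.trans e⟩

lemma Red.ne_one {w : List (Σ v : V, Gv v)} (h : Red Γ w) : ∀ s ∈ w, s.2 ≠ 1 := by
  induction w with
  | nil => simp
  | cons s w ih =>
    intro t ht
    rcases List.mem_cons.1 ht with rfl | ht
    · exact h.1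
    · exact ih h.2.2 t ht

lemma isReducedWord_iff {w : List (Σ v : V, Gv v)} {g : GraphProduct Γ Gv} :
    IsReducedWord Γ Gv w g ↔ Red Γ w ∧ wordProd Γ Gv w = g := by
  constructor
  · rintro ⟨h1, h2, h3⟩
    refine ⟨?_, h1⟩
    by_contra hn
    obtain ⟨w', g1, g2, g3, g4, g5⟩ := exists_red (Γ := Γ) w
    have := h3 w' (g2.trans h1)
    have := g4 hn
    omega
  · rintro ⟨h1, h2⟩
    refine ⟨h2, h1.ne_one, fun w' h' => ?_⟩
    obtain ⟨w'', g1, g2, g3, g4, g5⟩ := exists_red (Γ := Γ) w'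
    have := (Sh.of_wp h1 g1 (h2.trans (g2.trans h').symm)).perm.length_eq
    omega

/-- inverse word -/
def inv (w : List (Σ v : V, Gv v)) : List (Σ v : V, Gv v) :=
  (w.map fun s => (⟨s.1, s.2⁻¹⟩ : Σ v : V, Gv v)).reverse

lemma inv_cons (s : Σ v : V, Gv v) (w) : inv (s :: w) = inv w ++ [⟨s.1, s.2⁻¹⟩] := by simp [inv]

lemma inv_append (w w' : List (Σ v : V, Gv v)) : inv (w ++ w') = inv w' ++ inv w := by simp [inv]

lemma inv_inv' (w : List (Σ v : V, Gv v)) : inv (inv w) = w := by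
  simp [inv, Function.comp_def]

lemma inv_length (w : List (Σ v : V, Gv v)) : (inv w).length = w.length := by simp [inv]

lemma wp_inv (w : List (Σ v : V, Gv v)) : wordProd Γ Gv (inv w) = (wordProd Γ Gv w)⁻¹ := by
  induction w with
  | nil => simp [inv, wp_nil]
  | cons s w ih => rw [inv_cons, wp_append, ih, wp_cons, wp_cons, wp_nil]; simp

lemma mem_inv {w : List (Σ v : V, Gv v)} {s} (h : s ∈ inv w) : ∃ t ∈ w, t.1 = s.1 := by
  simp only [inv, List.mem_reverse, List.mem_map] at h
  obtain ⟨t, ht, rfl⟩ := h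
  exact ⟨t, ht, rfl⟩

lemma Red.inv {w : List (Σ v : V, Gv v)} (h : Red Γ w) : Red Γ (inv w) := by
  refine (isReducedWord_iff.1 ⟨rfl, ?_, fun w' h' => ?_⟩).1
  · intro s hs
    simp only [GPAux.inv, List.mem_reverse, List.mem_map] at hs
    obtain ⟨t, ht, rfl⟩ := hs
    simpa using h.ne_one t ht
  · have := (isReducedWord_iff.2 ⟨h, rfl⟩).2.2 (GPAux.inv w') (by rw [wp_inv, h', wp_inv, inv_inv])
    rw [inv_length] at *
    exact this

lemma Sh.inv {w w' : List (Σ v : V, Gv v)} (h : Sh Γ w w') (hr : Red Γ w) :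
    Sh Γ (inv w) (GPAux.inv w') :=
  .of_wp hr.inv (h.red_iff.1 hr).inv (by rw [wp_inv, wp_inv, h.wp])

lemma Ls_subset {w : List (Σ v : V, Gv v)} {v : V} (h : v ∈ Ls Γ w) : ∃ s ∈ w, s.1 = v := by
  obtain ⟨a, w', h1⟩ := Sh.of_mem h
  exact ⟨⟨v, a⟩, h1.perm.mem_iff.2 List.mem_cons_self, rfl⟩

lemma Ls_append_left {w w' : List (Σ v : V, Gv v)} {v : V} (h : v ∈ Ls Γ w) :
    v ∈ Ls Γ (w ++ w') := by
  induction w with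
  | nil => exact h.elim
  | cons s w ih => exact h.imp id (fun h => ⟨h.1, ih h.2⟩)

lemma Ls_append {w w' : List (Σ v : V, Gv v)} {v : V} (h : v ∈ Ls Γ (w ++ w')) :
    v ∈ Ls Γ w ∨ (v ∈ Ls Γ w' ∧ ∀ s ∈ w, Γ.Adj v s.1) := by
  induction w with
  | nil => exact .inr ⟨h, by simp⟩
  | cons s w ih =>
    rcases h with h | ⟨h1, h2⟩
    · exact .inl (.inl h)
    · rcases ih h2 with h | ⟨h3, h4⟩
      · exact .inl (.inr ⟨h1, h⟩)
      · refine .inr ⟨h3, fun t ht => ?_⟩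
        rcases List.mem_cons.1 ht with rfl | ht
        · exact h1.symm
        · exact h4 t ht

lemma Red.append {w w' : List (Σ v : V, Gv v)} (h : Red Γ w) (h' : Red Γ w')
    (hd : ∀ s ∈ w, s.1 ∉ Ls Γ w') : Red Γ (w ++ w') := by
  induction w with
  | nil => exact h'
  | cons s w ih =>
    refine ⟨h.1, fun hc => ?_, ih h.2.2 fun t ht => hd t (List.mem_cons_of_mem _ ht)⟩
    rcases Ls_append hc with h1 | h1
    · exact h.2.1 h1
    · exact hd s List.mem_cons_self h1.1

lemma wp_comm {u : V} (a : Gv u) {w : List (Σ v : V, Gv v)} (h : ∀ s ∈ w, Γ.Adj u s.1) :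
    GraphProduct.of Γ Gv u a * wordProd Γ Gv w = wordProd Γ Gv w * GraphProduct.of Γ Gv u a := by
  induction w with
  | nil => simp [wp_nil]
  | cons s w ih =>
    rw [wp_cons, ← mul_assoc, of_comm (h s List.mem_cons_self), mul_assoc,
      ih fun t ht => h t (List.mem_cons_of_mem _ ht), mul_assoc]

lemma Sh.append_right {w w' : List (Σ v : V, Gv v)} (h : Sh Γ w w') (z) :
    Sh Γ (w ++ z) (w' ++ z) := by
  induction h with
  | refl => exact .refl _
  | swap s t w h => exact .swap _ _ _ h
  | cons s h ih => exact ih.cons _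
  | symm h ih => exact ih.symm
  | trans h h' ih ih' => exact ih.trans ih'

lemma main (U : Set V) (wx : List (Σ v : V, Gv v)) (hx : Red Γ wx) (n : ℕ) :
    ∀ (wg wy : List (Σ v : V, Gv v)), wg.length = n → Red Γ wg → Red Γ wy →
      (∀ s ∈ wy, s.1 ∈ U) →
      wordProd Γ Gv wg * wordProd Γ Gv wx = wordProd Γ Gv wy * wordProd Γ Gv wg →
      (∀ s ∈ wx, s.1 ∉ Ls Γ (inv wg)) →
      ∃ w₁ w₂ : List (Σ v : V, Gv v), Sh Γ wg (w₁ ++ w₂) ∧ (∀ s ∈ w₁, s.1 ∈ U) ∧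
        (∀ s ∈ w₂, ∀ t ∈ wx, Γ.Adj s.1 t.1) := by
  induction n with
  | zero =>
    intro wg wy hl _ _ _ _ _
    obtain rfl := List.length_eq_zero_iff.1 hl
    exact ⟨[], [], .refl _, by simp, by simp⟩
  | succ n ih =>
    intro wg wy hl hg hy hU he hlast
    by_cases c1 : ∃ u ∈ U, u ∈ Ls Γ wg
    · obtain ⟨u, hu, hul⟩ := c1
      obtain ⟨a, w', hs⟩ := Sh.of_mem hul
      obtain ⟨wy', k1, k2, -, -, k3⟩ :=
        exists_red (Γ := Γ) ((⟨u, a⁻¹⟩ : Σ v : V, Gv v) :: (wy ++ [⟨u, a⟩]))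
      have hr := hs.red_iff.1 hg
      obtain ⟨w₁, w₂, q1, q2, q3⟩ := ih w' wy' (by have := hs.perm.length_eq; simp at this; omega)
        hr.2.2 k1 (by
          intro s hs
          obtain ⟨t, ht, e⟩ := k3 s hs
          rw [← e]
          simp only [List.mem_cons, List.mem_append, List.not_mem_nil, or_false] at ht
          rcases ht with rfl | ht | rfl
          · exact hu
          · exact hU t ht
          · exact hu) (by
          rw [hs.wp, wp_cons] at he
          rw [k2, wp_cons, wp_append, wp_cons, wp_nil, mul_one]
          simp only [map_inv]
          rw [mul_assoc, mul_assoc, ← he]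
          group) (by
          intro s hsx hc
          refine hlast s hsx ?_
          rw [(hs.inv hg).Ls_eq, inv_cons]
          exact Ls_append_left hc)
      refine ⟨⟨u, a⟩ :: w₁, w₂, hs.trans (q1.cons _), ?_, q3⟩
      intro s hs
      rcases List.mem_cons.1 hs with rfl | h
      · exact hu
      · exact q2 s h
    by_cases c2 : ∃ u ∈ Ls Γ (inv wg), ∀ t ∈ wx, Γ.Adj u t.1
    · obtain ⟨u, hul, hu⟩ := c2
      obtain ⟨a, w', hs⟩ := Sh.of_mem hul
      have hr := hs.red_iff.1 hg.inv
      have hs' : Sh Γ wg (inv w' ++ [⟨u, a⁻¹⟩]) := by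
        have := hs.inv hg.inv
        rwa [inv_inv', inv_cons] at this
      obtain ⟨w₁, w₂, q1, q2, q3⟩ := ih (inv w') wy
        (by have := hs'.perm.length_eq; simp at this; omega)
        hr.2.2.inv hy hU (by
          rw [hs'.wp, wp_append, wp_cons, wp_nil, mul_one] at he
          rw [mul_assoc, wp_comm _ hu, ← mul_assoc, ← mul_assoc] at he
          exact mul_right_cancel he) (by
          rw [inv_inv']
          intro s hsx hc
          refine hlast s hsx ?_
          rw [hs.Ls_eq]
          exact .inr ⟨hu s hsx, hc⟩)
      refine ⟨w₁, w₂ ++ [⟨u, a⁻¹⟩], ?_, q2, ?_⟩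
      · rw [← List.append_assoc]
        exact hs'.trans (q1.append_right _)
      · intro s hs
        rcases List.mem_append.1 hs with h | h
        · exact q3 s h
        · rw [List.mem_singleton.1 h]
          exact hu
    exfalso
    have r1 : Red Γ (wy ++ wg) := hy.append hg fun s hs hc => c1 ⟨_, hU s hs, hc⟩
    have r2 : Red Γ (inv wx ++ inv wg) := hx.inv.append hg.inv fun s hs => by
      obtain ⟨t, ht, e⟩ := mem_inv hs
      rw [← e]
      exact hlast t ht
    have r3 := r1.inv
    have hsh : Sh Γ (inv wx ++ inv wg) (inv (wy ++ wg)) := .of_wp r2 r3 (by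
      rw [wp_append, wp_inv, wp_inv, wp_inv, wp_append, ← he, mul_inv_rev])
    obtain ⟨s, z, hz⟩ : ∃ s z, inv wg = s :: z := by
      cases h : inv wg with
      | nil => have := inv_length wg; rw [h, hl] at this; simp at this
      | cons s z => exact ⟨s, z, rfl⟩
    have m1 : s.1 ∈ Ls Γ (inv wg) := by rw [hz]; exact .inl rfl
    have m2 : s.1 ∈ Ls Γ (inv wx ++ inv wg) := by
      rw [hsh.Ls_eq, inv_append]
      exact Ls_append_left m1
    rcases Ls_append m2 with h | ⟨-, h⟩
    · obtain ⟨t, ht, e⟩ := Ls_subset h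
      obtain ⟨r, hr, e'⟩ := mem_inv ht
      apply hlast r hr
      rwa [e', e]
    · refine c2 ⟨s.1, m1, fun t ht => ?_⟩
      exact h ⟨t.1, t.2⁻¹⟩ (by
        simp only [inv, List.mem_reverse, List.mem_map]
        exact ⟨t, ht, rfl⟩)

lemma exists_word (g : GraphProduct Γ Gv) : ∃ w, wordProd Γ Gv w = g := by
  obtain ⟨c, rfl⟩ := QuotientGroup.mk'_surjective _ g
  induction c using Monoid.CoprodI.induction_on with
  | one => exact ⟨[], (map_one _).symm⟩
  | of i m => exact ⟨[⟨i, m⟩], by rw [wp_cons, wp_nil, mul_one]; rfl⟩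
  | mul x y hx hy =>
    obtain ⟨a, ha⟩ := hx
    obtain ⟨b, hb⟩ := hy
    exact ⟨a ++ b, by rw [wp_append, ha, hb]; exact (map_mul _ _ _).symm⟩

lemma exists_red_word (g : GraphProduct Γ Gv) : ∃ w, Red Γ w ∧ wordProd Γ Gv w = g := by
  obtain ⟨w, rfl⟩ := exists_word g
  obtain ⟨w', h1, h2, -⟩ := exists_red (Γ := Γ) w
  exact ⟨w', h1, h2⟩

lemma mem_supp {w : List (Σ v : V, Gv v)} (h : Red Γ w) {v : V} :
    v ∈ supp Γ Gv (wordProd Γ Gv w) ↔ ∃ s ∈ w, s.1 = v := by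
  constructor
  · rintro ⟨w', h', s, hs, e⟩
    obtain ⟨h1, h2⟩ := isReducedWord_iff.1 h'
    exact ⟨s, (Sh.of_wp h1 h h2).perm.mem_iff.1 hs, e⟩
  · rintro ⟨s, hs, e⟩
    exact ⟨w, isReducedWord_iff.2 ⟨h, rfl⟩, s, hs, e⟩

end GPAux

/-- Antolin–Minasyan's Lemma 3.2: in a non-degenerate graph product, if `x ≠ 1`,
`g x g⁻¹ = y`, the support of `y` is contained in `U`, and no reduced word for `g`
ends with a syllable whose vertex lies in the support of `x`, then `g` has a reduced
expression `(h₁, …, h_r, h_{r+1}, …, h_n)` whose first `r` syllables lie in vertex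
groups over `U` and whose remaining syllables lie in vertex groups over
`link(supp x)`. -/
theorem conjugator_normal_form {V : Type} [Fintype V] (Γ : SimpleGraph V) (Gv : V → Type)
    [∀ v, Group (Gv v)] (hnd : GraphProduct.NonDegenerate Gv)
    (U : Set V) (g x y : GraphProduct Γ Gv)
    (hx : x ≠ 1) (hconj : g * x * g⁻¹ = y)
    (hsuppy : GraphProduct.supp Γ Gv y ⊆ U)
    (hlast : ∀ w, GraphProduct.IsReducedWord Γ Gv w g →
      ∀ s, w.getLast? = some s → s.1 ∉ GraphProduct.supp Γ Gv x) :
    ∃ w₁ w₂ : List (Σ v : V, Gv v),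
      GraphProduct.IsReducedWord Γ Gv (w₁ ++ w₂) g ∧
      (∀ s ∈ w₁, s.1 ∈ U) ∧
      (∀ s ∈ w₂, s.1 ∈ SimpleGraph.linkSet Γ (GraphProduct.supp Γ Gv x)) := by
  obtain ⟨wg, hg, rfl⟩ := GPAux.exists_red_word g
  obtain ⟨wx, hwx, rfl⟩ := GPAux.exists_red_word x
  obtain ⟨wy, hy, rfl⟩ := GPAux.exists_red_word y
  obtain ⟨w₁, w₂, h1, h2, h3⟩ := GPAux.main U wx hwx _ wg wy rfl hg hy
    (fun s hs => hsuppy ((GPAux.mem_supp hy).2 ⟨s, hs, rfl⟩))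
    (by rw [← hconj]; group) (by
      intro s hs hc
      obtain ⟨a, w', hsh⟩ := GPAux.Sh.of_mem hc
      have hr := hsh.inv hg.inv
      rw [GPAux.inv_inv', GPAux.inv_cons] at hr
      exact hlast _ (GPAux.isReducedWord_iff.2 ⟨hr.red_iff.1 hg, hr.wp.symm⟩) ⟨s.1, a⁻¹⟩
        (by simp) ((GPAux.mem_supp hwx).2 ⟨s, hs, rfl⟩))
  refine ⟨w₁, w₂, GPAux.isReducedWord_iff.2 ⟨h1.red_iff.1 hg, h1.wp.symm⟩, h2, ?_⟩
  intro s hs v hv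
  obtain ⟨t, ht, rfl⟩ := (GPAux.mem_supp hwx).1 hv
  exact h3 s hs t ht
end
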